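/- Let m ≥ 6 be an integer and let θ ∈ (2π/m, 2π/(m−1)). If B is a K_θ-primitive matrix with γ(B) = 2m − 1, then B is a positive scalar multiple of A_θ. In other words, up to positive scalar multiples, A_θ is the only K_θ-primitive matrix whose exponent equals 2m − 1. -/

import Mathlib

open Matrix Set Real

noncomputable section

/-- A proper cone in `ℝ^n`: a closed convex cone that is pointed and full. -/
def IsProperCone {n : ℕ} (K : Set (Fin n → ℝ)) : Prop :=
  IsClosed K ∧ (∀ x ∈ K, ∀ y ∈ K, x + y ∈ K) ∧
    (∀ (c : ℝ), 0 ≤ c → ∀ x ∈ K, c • x ∈ K) ∧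
    K ∩ (-K) = {0} ∧ (interior K).Nonempty

/-- The positive hull (cone generated by) finitely many vectors. -/
def ConeGen {n m : ℕ} (y : Fin m → Fin n → ℝ) : Set (Fin n → ℝ) :=
  {x | ∃ c : Fin m → ℝ, (∀ j, 0 ≤ c j) ∧ x = ∑ j, c j • y j}

/-- A polyhedral cone: a proper cone that is the positive hull of finitely many vectors. -/
def IsPolyhedralCone {n : ℕ} (K : Set (Fin n → ℝ)) : Prop :=
  IsProperCone K ∧ ∃ (m : ℕ) (y : Fin m → Fin n → ℝ), K = ConeGen y

/-- `A` is `K`-nonnegative: `A K ⊆ K`. -/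
def KNonneg {n : ℕ} (K : Set (Fin n → ℝ)) (A : Matrix (Fin n) (Fin n) ℝ) : Prop :=
  ∀ x ∈ K, A.mulVec x ∈ K

/-- `A` is `K`-positive: `A` maps `K \ {0}` into the interior of `K`. -/
def KPositive {n : ℕ} (K : Set (Fin n → ℝ)) (A : Matrix (Fin n) (Fin n) ℝ) : Prop :=
  ∀ x ∈ K, x ≠ 0 → A.mulVec x ∈ interior K

/-- `A` is `K`-primitive: `A` is `K`-nonnegative and some power of `A` is `K`-positive. -/
def KPrimitive {n : ℕ} (K : Set (Fin n → ℝ)) (A : Matrix (Fin n) (Fin n) ℝ) : Prop :=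
  KNonneg K A ∧ ∃ k : ℕ, 0 < k ∧ KPositive K (A ^ k)

/-- The exponent `γ(A)` of a `K`-primitive matrix: the least `k ≥ 1` with `A^k` `K`-positive. -/
def expnt {n : ℕ} (K : Set (Fin n → ℝ)) (A : Matrix (Fin n) (Fin n) ℝ) : ℕ :=
  sInf {k : ℕ | 0 < k ∧ KPositive K (A ^ k)}

/-- `x` is an extreme vector of `K`. -/
def IsExtremeVec {n : ℕ} (K : Set (Fin n → ℝ)) (x : Fin n → ℝ) : Prop :=
  x ∈ K ∧ x ≠ 0 ∧ ∀ y ∈ K, ∀ z ∈ K, x = y + z →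
    (∃ a : ℝ, 0 ≤ a ∧ y = a • x) ∧ (∃ b : ℝ, 0 ≤ b ∧ z = b • x)

/-- The set of extreme rays of `K`. -/
def ExtremeRays {n : ℕ} (K : Set (Fin n → ℝ)) : Set (Set (Fin n → ℝ)) :=
  {R | ∃ x, IsExtremeVec K x ∧ R = {y | ∃ c : ℝ, 0 ≤ c ∧ y = c • x}}

/-- `K ∈ P(m,n)`: an `n`-dimensional polyhedral cone in `ℝ^n` with exactly `m` extreme rays.
(A proper cone in `ℝ^n` has nonempty interior, hence is automatically `n`-dimensional.) -/
def MemP {n : ℕ} (m : ℕ) (K : Set (Fin n → ℝ)) : Prop :=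
  IsPolyhedralCone K ∧ (ExtremeRays K).ncard = m

/-- A face of a cone `K`. -/
def IsFace {n : ℕ} (K F : Set (Fin n → ℝ)) : Prop :=
  0 ∈ F ∧ F ⊆ K ∧ (∀ x ∈ F, ∀ y ∈ F, x + y ∈ F) ∧
    (∀ (c : ℝ), 0 ≤ c → ∀ x ∈ F, c • x ∈ F) ∧
    ∀ x ∈ F, ∀ y ∈ K, x - y ∈ K → y ∈ F

/-- `A` is `K`-irreducible: `A` is `K`-nonnegative and leaves invariant no nontrivial face. -/
def KIrreducible {n : ℕ} (K : Set (Fin n → ℝ)) (A : Matrix (Fin n) (Fin n) ℝ) : Prop :=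
  KNonneg K A ∧ ∀ F : Set (Fin n → ℝ), IsFace K F → (∀ x ∈ F, A.mulVec x ∈ F) →
    F = ({0} : Set (Fin n → ℝ)) ∨ F = K

/-- The polynomial `g_θ(t) = (sin((m-1)θ)/sin θ)·t^m - (sin(mθ)/sin θ)·t^{m-1} + 1`. -/
def gpoly (m : ℕ) (θ t : ℝ) : ℝ :=
  (Real.sin (((m : ℝ) - 1) * θ) / Real.sin θ) * t ^ m
    - (Real.sin ((m : ℝ) * θ) / Real.sin θ) * t ^ (m - 1) + 1

/-- The vector `x_{j+1}(θ) = (r^j cos(jθ), r^j sin(jθ), 1)ᵀ` (indexed from `j = 0`). -/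
def xvec (r θ : ℝ) (j : ℕ) : Fin 3 → ℝ :=
  ![r ^ j * Real.cos ((j : ℝ) * θ), r ^ j * Real.sin ((j : ℝ) * θ), 1]

/-- The cone `K_θ` generated by `x_1(θ), …, x_m(θ)` (with `r` the positive root of `g_θ`). -/
def Ktheta (m : ℕ) (r θ : ℝ) : Set (Fin 3 → ℝ) :=
  ConeGen (fun j : Fin m => xvec r θ j.val)

/-- The matrix `A_θ = r·[[cos θ, -sin θ],[sin θ, cos θ]] ⊕ [1]`. -/
def Atheta (r θ : ℝ) : Matrix (Fin 3) (Fin 3) ℝ :=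
  !![r * Real.cos θ, -(r * Real.sin θ), 0;
     r * Real.sin θ,    r * Real.cos θ, 0;
     0, 0, 1]

structure PolyData (n : ℕ) (X : Fin (n+1) → Fin 3 → ℝ)
    (f : Fin (n+1) → ((Fin 3 → ℝ) →ₗ[ℝ] ℝ)) (K : Set (Fin 3 → ℝ)) : Prop where
  memK : ∀ y, y ∈ K ↔ ∀ i, 0 ≤ f i y
  gen : ∀ y ∈ K, ∃ c : Fin (n+1) → ℝ, (∀ j, 0 ≤ c j) ∧ y = ∑ j, c j • X j
  f0 : ∀ i, f i (X i) = 0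
  f1 : ∀ i, f i (X (i+1)) = 0
  fpos : ∀ i j, j ≠ i → j ≠ i + 1 → 0 < f i (X j)
  int : ∀ y, y ∈ interior K ↔ ∀ i, 0 < f i y

/-- `y` dominates `y'` in the cone order. -/
def Dom (K : Set (Fin 3 → ℝ)) (y y' : Fin 3 → ℝ) : Prop :=
  ∃ C : ℝ, 0 ≤ C ∧ C • y - y' ∈ K

/-- `y` lies on the extreme ray `j`. -/
def IsV {n : ℕ} (X : Fin (n+1) → Fin 3 → ℝ) (j : Fin (n+1)) (y : Fin 3 → ℝ) : Prop :=
  ∃ p : ℝ, 0 < p ∧ y = p • X j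

/-- `y` lies in the relative interior of the two-dimensional face `j, j+1`. -/
def IsE {n : ℕ} (X : Fin (n+1) → Fin 3 → ℝ) (j : Fin (n+1)) (y : Fin 3 → ℝ) : Prop :=
  ∃ p q : ℝ, 0 < p ∧ 0 < q ∧ y = p • X j + q • X (j+1)

section PolyLemmas

variable {n : ℕ} {X : Fin (n+1) → Fin 3 → ℝ}
    {f : Fin (n+1) → ((Fin 3 → ℝ) →ₗ[ℝ] ℝ)} {K : Set (Fin 3 → ℝ)}
    {B : Matrix (Fin 3) (Fin 3) ℝ}

theorem PolyData.add_mem (P : PolyData n X f K) {x y : Fin 3 → ℝ} (hx : x ∈ K) (hy : y ∈ K) :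
    x + y ∈ K := by
  rw [P.memK] at *
  intro i
  rw [map_add]
  exact add_nonneg (hx i) (hy i)

theorem PolyData.smul_mem (P : PolyData n X f K) {x : Fin 3 → ℝ} {c : ℝ} (hc : 0 ≤ c)
    (hx : x ∈ K) : c • x ∈ K := by
  rw [P.memK] at *
  intro i
  rw [map_smul, smul_eq_mul]
  exact mul_nonneg hc (hx i)

theorem PolyData.X_mem (P : PolyData n X f K) (j : Fin (n+1)) : X j ∈ K := by
  rw [P.memK]
  intro i
  by_cases h1 : j = i
  · rw [h1, P.f0]
  by_cases h2 : j = i + 1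
  · rw [h2, P.f1]
  exact (P.fpos i j h1 h2).le

theorem pow_KNonneg (hB : KNonneg K B) (k : ℕ) : KNonneg K (B ^ k) := by
  induction k with
  | zero => intro x hx; simpa using hx
  | succ k ih =>
    intro x hx
    rw [pow_succ', ← Matrix.mulVec_mulVec]
    exact hB _ (ih x hx)

theorem PolyData.int_ne (P : PolyData n X f K) {y : Fin 3 → ℝ} (h : y ∈ interior K) : y ≠ 0 := by
  rintro rfl
  have := (P.int 0).1 h 0
  simp at this

theorem PolyData.pow_pos (P : PolyData n X f K) {N : ℕ} (hN : KPositive K (B ^ N)) (d : ℕ) :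
    KPositive K (B ^ (N * (d + 1))) := by
  induction d with
  | zero => simpa using hN
  | succ d ih =>
    intro x hx hx0
    have h1 := ih x hx hx0
    have : N * (d + 1 + 1) = N + N * (d + 1) := by ring
    rw [this, pow_add, ← Matrix.mulVec_mulVec]
    exact hN _ (interior_subset h1) (P.int_ne h1)

theorem PolyData.noreturn (P : PolyData n X f K) (hB : KPrimitive K B) {y : Fin 3 → ℝ}
    (hy : y ∈ K) (hy0 : y ≠ 0) {i : Fin (n+1)} (hi : f i y = 0) {d : ℕ} (hd : 0 < d)
    (h : Dom K y ((B ^ d) *ᵥ y)) : False := by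
  obtain ⟨C, hC, hCy⟩ := h
  obtain ⟨hnn, N, hN, hpos⟩ := hB
  have key : ∀ k : ℕ, C ^ k • y - (B ^ (d * k)) *ᵥ y ∈ K := by
    intro k
    induction k with
    | zero =>
      rw [P.memK]; intro i; simp
    | succ k ih =>
      have e : C ^ (k+1) • y - (B ^ (d * (k+1))) *ᵥ y
          = (B ^ d) *ᵥ (C ^ k • y - (B ^ (d * k)) *ᵥ y) + C ^ k • (C • y - (B ^ d) *ᵥ y) := by
        have : d * (k+1) = d + d * k := by ring
        rw [this, pow_add B d, ← Matrix.mulVec_mulVec, Matrix.mulVec_sub, Matrix.mulVec_smul,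
          smul_sub, smul_smul, pow_succ]
        abel
      rw [e]
      exact P.add_mem (pow_KNonneg hnn d _ ih) (P.smul_mem (pow_nonneg hC k) hCy)
  have h1 := (P.memK _).1 (key N) i
  rw [map_sub, map_smul, hi, smul_zero] at h1
  obtain ⟨e, rfl⟩ : ∃ e, d = e + 1 := ⟨d - 1, by omega⟩
  have h2 := (P.int _).1 (P.pow_pos hpos e y hy hy0) i
  rw [mul_comm] at h1
  linarith

theorem PolyData.Dom_map (_ : PolyData n X f K) (hB : KNonneg K B) {y y' : Fin 3 → ℝ}
    (h : Dom K y y') : Dom K (B *ᵥ y) (B *ᵥ y') := by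
  obtain ⟨C, hC, h⟩ := h
  refine ⟨C, hC, ?_⟩
  have := hB _ h
  rwa [Matrix.mulVec_sub, Matrix.mulVec_smul] at this

theorem PolyData.Dom_trans (P : PolyData n X f K) {x y z : Fin 3 → ℝ}
    (h : Dom K x y) (h' : Dom K y z) : Dom K x z := by
  obtain ⟨C, hC, h⟩ := h
  obtain ⟨D, hD, h'⟩ := h'
  refine ⟨D * C, mul_nonneg hD hC, ?_⟩
  have := P.add_mem (P.smul_mem hD h) h'
  rw [smul_sub, smul_smul] at this
  simpa using this

theorem PolyData.Dom_zero (P : PolyData n X f K) {y y' : Fin 3 → ℝ} (hy' : y' ∈ K)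
    (h : Dom K y y') {i : Fin (n+1)} (hi : f i y = 0) : f i y' = 0 := by
  obtain ⟨C, hC, h⟩ := h
  have h1 := (P.memK _).1 h i
  have h2 := (P.memK _).1 hy' i
  rw [map_sub, map_smul, hi, smul_zero] at h1
  linarith

theorem PolyData.zero_mem (P : PolyData n X f K) : (0 : Fin 3 → ℝ) ∈ K := by
  rw [P.memK]; intro i; simp

theorem PolyData.V_dom (P : PolyData n X f K) {j} {y : Fin 3 → ℝ} (h : IsV X j y) :
    Dom K y (X j) := by
  obtain ⟨p, hp, rfl⟩ := h
  refine ⟨p⁻¹, by positivity, ?_⟩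
  rw [smul_smul, inv_mul_cancel₀ hp.ne', one_smul, sub_self]
  exact P.zero_mem

theorem PolyData.dom_V (P : PolyData n X f K) {j} {y : Fin 3 → ℝ} (h : IsV X j y) :
    Dom K (X j) y := by
  obtain ⟨p, hp, rfl⟩ := h
  refine ⟨p, hp.le, ?_⟩
  rw [sub_self]
  exact P.zero_mem

theorem PolyData.E_dom0 (P : PolyData n X f K) {j} {y : Fin 3 → ℝ} (h : IsE X j y) :
    Dom K y (X j) := by
  obtain ⟨p, q, hp, hq, rfl⟩ := h
  refine ⟨p⁻¹, by positivity, ?_⟩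
  rw [smul_add, smul_smul, inv_mul_cancel₀ hp.ne', one_smul, add_sub_cancel_left, smul_smul]
  exact P.smul_mem (by positivity) (P.X_mem _)

theorem PolyData.E_dom1 (P : PolyData n X f K) {j} {y : Fin 3 → ℝ} (h : IsE X j y) :
    Dom K y (X (j+1)) := by
  obtain ⟨p, q, hp, hq, rfl⟩ := h
  refine ⟨q⁻¹, by positivity, ?_⟩
  rw [smul_add, smul_smul, smul_smul, inv_mul_cancel₀ hq.ne', one_smul, add_sub_cancel_right]
  exact P.smul_mem (by positivity) (P.X_mem _)

theorem PolyData.Dom_comb (P : PolyData n X f K) {x y z : Fin 3 → ℝ}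
    (h : Dom K x y) (h' : Dom K x z) {p q : ℝ} (hp : 0 ≤ p) (hq : 0 ≤ q) :
    Dom K x (p • y + q • z) := by
  obtain ⟨C, hC, h⟩ := h
  obtain ⟨D, hD, h'⟩ := h'
  refine ⟨p * C + q * D, by positivity, ?_⟩
  have := P.add_mem (P.smul_mem hp h) (P.smul_mem hq h')
  convert this using 1
  module

theorem PolyData.E_dom_E (P : PolyData n X f K) {j} {y y' : Fin 3 → ℝ} (h : IsE X j y)
    (h' : IsE X j y') : Dom K y y' := by
  obtain ⟨p, q, hp, hq, rfl⟩ := h'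
  exact P.Dom_comb (P.E_dom0 h) (P.E_dom1 h) hp.le hq.le

theorem PolyData.zero_cases (P : PolyData n X f K) {i j : Fin (n+1)} (h : f i (X j) = 0) :
    j = i ∨ j = i + 1 := by
  by_contra hc
  push Not at hc
  exact (P.fpos i j hc.1 hc.2).ne' h

theorem one_ne (hn : 5 ≤ n) (i : Fin (n+1)) : i + 1 ≠ i := by
  intro h
  have h1 : (1 : Fin (n+1)) = 0 := by simpa using h
  have := congrArg Fin.val h1
  rw [Fin.val_one', Fin.val_zero, Nat.mod_eq_of_lt (by omega)] at this
  omega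

theorem two_ne (hn : 5 ≤ n) (i : Fin (n+1)) : i + 1 + 1 ≠ i := by
  intro h
  have h1 : (1 : Fin (n+1)) + 1 = 0 := by
    rw [add_assoc] at h
    simpa using h
  have h3 := congrArg Fin.val h1
  rw [Fin.val_add, Fin.val_one', Fin.val_zero, Nat.mod_eq_of_lt (a := 1) (by omega),
    Nat.mod_eq_of_lt (by omega)] at h3
  omega

theorem PolyData.E_zero (P : PolyData n X f K) (hn : 5 ≤ n) {i j : Fin (n+1)} {y : Fin 3 → ℝ}
    (hy : IsE X j y) (h : f i y = 0) : i = j := by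
  have h0 := P.Dom_zero (P.X_mem _) (P.E_dom0 hy) h
  have h1 := P.Dom_zero (P.X_mem _) (P.E_dom1 hy) h
  rcases P.zero_cases h0 with h0 | h0
  · exact h0.symm
  · rcases P.zero_cases h1 with h1 | h1
    · exfalso
      rw [h0] at h1
      exact two_ne hn i h1
    · simpa using h1.symm

theorem PolyData.E_f (P : PolyData n X f K) {j : Fin (n+1)} {y : Fin 3 → ℝ}
    (hy : IsE X j y) : f j y = 0 := by
  obtain ⟨p, q, hp, hq, rfl⟩ := hy
  simp [P.f0, P.f1]

theorem PolyData.V_f (P : PolyData n X f K) {j : Fin (n+1)} {y : Fin 3 → ℝ}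
    (hy : IsV X j y) : f j y = 0 := by
  obtain ⟨p, hp, rfl⟩ := hy
  simp [P.f0]

theorem PolyData.face_repr (P : PolyData n X f K) (hn : 5 ≤ n) {i : Fin (n+1)} {y : Fin 3 → ℝ}
    (hy : y ∈ K) (h : f i y = 0) :
    ∃ p q : ℝ, 0 ≤ p ∧ 0 ≤ q ∧ y = p • X i + q • X (i+1) := by
  obtain ⟨c, hc, rfl⟩ := P.gen y hy
  refine ⟨c i, c (i+1), hc _, hc _, ?_⟩
  rw [← Finset.sum_pair (f := fun j => c j • X j) (one_ne hn i).symm]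
  symm
  apply Finset.sum_subset (Finset.subset_univ _)
  intro j _ hj
  simp only [Finset.mem_insert, Finset.mem_singleton, not_or] at hj
  rw [map_sum, Finset.sum_eq_zero_iff_of_nonneg] at h
  · have h1 := h j (Finset.mem_univ _)
    rw [map_smul, smul_eq_mul] at h1
    rcases mul_eq_zero.1 h1 with h1 | h1
    · rw [h1, zero_smul]
    · exact absurd h1 (P.fpos i j hj.1 hj.2).ne'
  · intro j _
    rw [map_smul, smul_eq_mul]
    exact mul_nonneg (hc j) ((P.memK _).1 (P.X_mem j) i)

theorem PolyData.classify (P : PolyData n X f K) (hn : 5 ≤ n) {i : Fin (n+1)} {y : Fin 3 → ℝ}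
    (hy : y ∈ K) (hy0 : y ≠ 0) (h : f i y = 0) :
    (∃ j, IsV X j y) ∨ (∃ j, IsE X j y) := by
  obtain ⟨p, q, hp, hq, rfl⟩ := P.face_repr hn hy h
  rcases hp.eq_or_lt with rfl | hp
  · rcases hq.eq_or_lt with rfl | hq
    · simp at hy0
    · exact Or.inl ⟨i+1, q, hq, by simp⟩
  · rcases hq.eq_or_lt with rfl | hq
    · exact Or.inl ⟨i, p, hp, by simp⟩
    · exact Or.inr ⟨i, p, q, hp, hq, rfl⟩

theorem PolyData.X_ne (P : PolyData n X f K) (hn : 5 ≤ n) (i : Fin (n+1)) : X i ≠ 0 := by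
  intro h
  have := P.fpos (i+1) i (one_ne hn i).symm (two_ne hn i).symm
  rw [h, map_zero] at this
  exact lt_irrefl _ this

/-- extremality -/
theorem PolyData.extreme (P : PolyData n X f K) (hn : 5 ≤ n) {j : Fin (n+1)} {y y' : Fin 3 → ℝ}
    (hy : IsV X j y) (hy' : y' ∈ K) (h : Dom K y y') : ∃ p : ℝ, y' = p • X j := by
  have e : j - 1 + 1 = j := by abel
  have h1 := P.Dom_zero hy' h (P.V_f hy)
  have h2 : f (j - 1) y' = 0 := by
    apply P.Dom_zero hy' h
    obtain ⟨p, hp, rfl⟩ := hy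
    have := P.f1 (j-1)
    rw [e] at this
    simp [this]
  obtain ⟨p, q, hp, hq, rfl⟩ := P.face_repr hn hy' h1
  refine ⟨p, ?_⟩
  have hj := P.fpos (j-1) (j+1) (by
    intro h
    apply two_ne hn (j-1)
    rw [e, h]) (by rw [e]; exact one_ne hn j)
  have h3 := P.f1 (j-1)
  rw [e] at h3
  rw [map_add, map_smul, map_smul, h3, smul_zero, zero_add, smul_eq_mul] at h2
  rcases mul_eq_zero.1 h2 with h2 | h2
  · simp [h2]
  · exact absurd h2 hj.ne'

theorem PolyData.prim_ne (P : PolyData n X f K) (hB : KPrimitive K B) {x : Fin 3 → ℝ}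
    (hx : x ∈ K) (hx0 : x ≠ 0) (k : ℕ) : (B ^ k) *ᵥ x ≠ 0 := by
  intro h
  obtain ⟨hnn, N, hN, hpos⟩ := hB
  have h1 := P.int_ne (P.pow_pos hpos k x hx hx0)
  apply h1
  have : N * (k+1) = (N * (k+1) - k) + k := by
    have : k ≤ N * (k+1) := by nlinarith
    omega
  rw [this, pow_add, ← Matrix.mulVec_mulVec, h, Matrix.mulVec_zero]

/-- interior is mapped to interior -/
theorem PolyData.int_map (P : PolyData n X f K) (hn : 5 ≤ n) (hB : KPrimitive K B) {x : Fin 3 → ℝ}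
    (hx : ∀ i, 0 < f i x) : ∀ i, 0 < f i (B *ᵥ x) := by
  intro i
  have hxK : x ∈ K := (P.memK _).2 (fun i => (hx i).le)
  have hBx := (P.memK _).1 (hB.1 x hxK) i
  rcases hBx.lt_or_eq with h | h
  · exact h
  exfalso
  have hdom : ∀ y ∈ K, Dom K x y := by
    intro y hy
    refine ⟨∑ j, f j y / f j x, Finset.sum_nonneg (fun j _ =>
      div_nonneg ((P.memK _).1 hy j) (hx j).le), ?_⟩
    rw [P.memK]
    intro j
    rw [map_sub, map_smul, smul_eq_mul]
    have h1 : f j y / f j x ≤ ∑ j, f j y / f j x :=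
      Finset.single_le_sum (f := fun j => f j y / f j x) (fun j _ =>
        div_nonneg ((P.memK _).1 hy j) (hx j).le) (Finset.mem_univ j)
    rw [div_le_iff₀ (hx j)] at h1
    linarith
  have hz : ∀ y ∈ K, f i (B *ᵥ y) = 0 := fun y hy =>
    P.Dom_zero (hB.1 y hy) (P.Dom_map hB.1 (hdom y hy)) h.symm
  obtain ⟨hnn, N, hN, hpos⟩ := hB
  have h1 := (P.int _).1 (hpos _ (P.X_mem 0) (P.X_ne hn 0)) i
  obtain ⟨e, rfl⟩ : ∃ e, N = e + 1 := ⟨N - 1, by omega⟩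
  rw [pow_succ', ← Matrix.mulVec_mulVec, hz _ (pow_KNonneg hnn e _ (P.X_mem 0))] at h1
  exact lt_irrefl _ h1

/-- the boundary orbit of a vertex -/
theorem PolyData.orbit (P : PolyData n X f K) (hn : 5 ≤ n) (hB : KPrimitive K B)
    (hγ : expnt K B = 2 * n + 1) :
    ∃ j0, ∀ k ≤ 2 * n, ∃ i, f i ((B ^ k) *ᵥ X j0) = 0 := by
  have h1 : ¬ KPositive K (B ^ (2*n)) := by
    intro h
    have : expnt K B ≤ 2 * n := Nat.sInf_le ⟨by omega, h⟩
    omega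
  have h2 : ∃ j0, ∃ i, f i ((B ^ (2*n)) *ᵥ X j0) = 0 := by
    by_contra hc
    push Not at hc
    apply h1
    intro x hx hx0
    rw [P.int]
    intro i
    have hnn : ∀ j, 0 < f i ((B ^ (2*n)) *ᵥ X j) := fun j =>
      lt_of_le_of_ne ((P.memK _).1 (pow_KNonneg hB.1 _ _ (P.X_mem j)) i) (hc j i).symm
    obtain ⟨c, hc, rfl⟩ := P.gen x hx
    rw [Matrix.mulVec_sum, map_sum]
    apply Finset.sum_pos'
    · intro j _
      rw [Matrix.mulVec_smul, map_smul]
      exact mul_nonneg (hc j) (hnn j).le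
    · by_contra hcc
      push Not at hcc
      apply hx0
      apply Finset.sum_eq_zero
      intro j hj
      have := hcc j hj
      rw [Matrix.mulVec_smul, map_smul, smul_eq_mul] at this
      have h3 : c j ≤ 0 := by
        by_contra h4
        push Not at h4
        have := mul_pos h4 (hnn j)
        linarith
      rw [le_antisymm h3 (hc j), zero_smul]
  obtain ⟨j0, i0, h2⟩ := h2
  refine ⟨j0, fun k hk => ?_⟩
  by_contra hc
  push Not at hc
  have h3 : ∀ d, ∀ i, 0 < f i ((B ^ (k + d)) *ᵥ X j0) := by
    intro d
    induction d with
    | zero =>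
      intro i
      exact lt_of_le_of_ne ((P.memK _).1 (pow_KNonneg hB.1 _ _ (P.X_mem j0)) i) (hc i).symm
    | succ d ih =>
      rw [← add_assoc, pow_succ', ← Matrix.mulVec_mulVec]
      exact P.int_map hn hB ih
  have := h3 (2 * n - k) i0
  rw [Nat.add_sub_cancel' hk] at this
  exact this.ne' h2

theorem cayley3 (B : Matrix (Fin 3) (Fin 3) ℝ) (h : B.det = 0) :
    ∃ t s : ℝ, B ^ 3 = t • B ^ 2 - s • B := by
  refine ⟨B 0 0 + B 1 1 + B 2 2, B 0 0 * B 1 1 - B 0 1 * B 1 0 + B 0 0 * B 2 2 - B 0 2 * B 2 0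
    + B 1 1 * B 2 2 - B 1 2 * B 2 1, ?_⟩
  rw [Matrix.det_fin_three] at h
  ext i j
  fin_cases i <;> fin_cases j <;>
    simp [pow_succ, Matrix.mul_apply, Fin.sum_univ_three] <;>
    first | linear_combination h | linear_combination (0 : ℝ) * h

theorem PolyData.det_ne (P : PolyData n X f K) (hn : 5 ≤ n) (hB : KPrimitive K B)
    {j0 : Fin (n+1)} (ho : ∀ k ≤ 2 * n, ∃ i, f i ((B ^ k) *ᵥ X j0) = 0) : B.det ≠ 0 := by
  intro hdet
  obtain ⟨t, s, hts⟩ := cayley3 B hdet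
  set v : ℕ → (Fin 3 → ℝ) := fun k => (B ^ k) *ᵥ X j0 with hv
  have hvK : ∀ k, v k ∈ K := fun k => pow_KNonneg hB.1 _ _ (P.X_mem j0)
  have hv0 : ∀ k, v k ≠ 0 := fun k => P.prim_ne hB (P.X_mem j0) (P.X_ne hn j0) k
  have hvv : ∀ k d, (B ^ d) *ᵥ v k = v (d + k) := by
    intro k d
    simp only [hv, pow_add, Matrix.mulVec_mulVec]
  have h3 : v 3 = t • v 2 - s • v 1 := by
    simp only [hv]
    rw [hts, Matrix.sub_mulVec, Matrix.smul_mulVec, Matrix.smul_mulVec, pow_one]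
  obtain ⟨i1, h1⟩ := ho 1 (by omega)
  obtain ⟨i2, h2⟩ := ho 2 (by omega)
  obtain ⟨i3, hi3⟩ := ho 3 (by omega)
  by_cases ht : 0 < t
  · by_cases hs : 0 ≤ s
    · apply P.noreturn hB (hvK 2) (hv0 2) h2 (d := 1) one_pos
      refine ⟨t, ht.le, ?_⟩
      rw [hvv, show 1 + 2 = 3 from rfl, h3, sub_sub_cancel]
      exact P.smul_mem hs (hvK 1)
    · push Not at hs
      have hd1 : Dom K (v 3) (v 1) := by
        refine ⟨(-s)⁻¹, inv_nonneg.2 (by linarith), ?_⟩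
        have : (-s)⁻¹ • v 3 - v 1 = ((-s)⁻¹ * t) • v 2 := by
          rw [h3, smul_sub, smul_smul, smul_smul]
          have : (-s)⁻¹ * s = -1 := by rw [inv_neg, neg_mul, inv_mul_cancel₀ hs.ne]
          rw [this]; module
        rw [this]
        exact P.smul_mem (mul_nonneg (inv_nonneg.2 (by linarith)) ht.le) (hvK 2)
      have hd2 : Dom K (v 3) (v 2) := by
        refine ⟨t⁻¹, inv_nonneg.2 ht.le, ?_⟩
        have : t⁻¹ • v 3 - v 2 = (t⁻¹ * (-s)) • v 1 := by
          rw [h3, smul_sub, smul_smul, smul_smul, inv_mul_cancel₀ ht.ne']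
          module
        rw [this]
        exact P.smul_mem (mul_nonneg (inv_nonneg.2 ht.le) (by linarith)) (hvK 1)
      have z1 := P.Dom_zero (hvK 1) hd1 hi3
      have z2 := P.Dom_zero (hvK 2) hd2 hi3
      have hyK : v 1 + v 2 ∈ K := P.add_mem (hvK 1) (hvK 2)
      have hy0 : v 1 + v 2 ≠ 0 := by
        intro h
        have : v 2 = - v 1 := by rw [eq_neg_iff_add_eq_zero, add_comm]; exact h
        apply P.noreturn hB (hvK 1) (hv0 1) h1 (d := 1) one_pos
        refine ⟨0, le_rfl, ?_⟩
        rw [hvv, show 1 + 1 = 2 from rfl, this]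
        simpa using hvK 1
      apply P.noreturn hB hyK hy0 (i := i3) (by rw [map_add, z1, z2, add_zero]) (d := 1) one_pos
      refine ⟨1 + t - s, by linarith, ?_⟩
      rw [Matrix.mulVec_add, hvv, hvv, show 1 + 1 = 2 from rfl, show 1 + 2 = 3 from rfl, h3]
      have : (1 + t - s) • (v 1 + v 2) - (v 2 + (t • v 2 - s • v 1))
          = (1 + t) • v 1 + (-s) • v 2 := by module
      rw [this]
      exact P.add_mem (P.smul_mem (by linarith) (hvK 1)) (P.smul_mem (by linarith) (hvK 2))
  · apply P.noreturn hB (hvK 1) (hv0 1) h1 (d := 2) two_pos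
    refine ⟨|s|, abs_nonneg s, ?_⟩
    rw [hvv, show 2 + 1 = 3 from rfl, h3]
    have : |s| • v 1 - (t • v 2 - s • v 1) = (|s| + s) • v 1 + (-t) • v 2 := by module
    rw [this]
    exact P.add_mem (P.smul_mem (by linarith [neg_abs_le s]) (hvK 1))
      (P.smul_mem (by linarith) (hvK 2))

theorem mulVec_inj (hdet : B.det ≠ 0) {x y : Fin 3 → ℝ} (h : B *ᵥ x = B *ᵥ y) : x = y :=
  Matrix.mulVec_injective_iff_isUnit.2
    ((Matrix.isUnit_iff_isUnit_det B).2 (isUnit_iff_ne_zero.2 hdet)) h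

theorem PolyData.X_indep (P : PolyData n X f K) (hn : 5 ≤ n) (i : Fin (n+1)) {p q : ℝ}
    (h : p • X i + q • X (i+1) = 0) : p = 0 ∧ q = 0 := by
  constructor
  · have h1 := congrArg (f (i+1)) h
    rw [map_add, map_smul, map_smul, P.f0, smul_zero, add_zero, map_zero, smul_eq_mul] at h1
    exact (mul_eq_zero.1 h1).resolve_right
      (P.fpos (i+1) i (one_ne hn i).symm (two_ne hn i).symm).ne'
  · have h1 := congrArg (f (i-1)) h
    have e : i - 1 + 1 = i := by abel
    have h2 := P.f1 (i-1)
    rw [e] at h2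
    rw [map_add, map_smul, map_smul, h2, smul_zero, zero_add, map_zero, smul_eq_mul] at h1
    refine (mul_eq_zero.1 h1).resolve_right (P.fpos (i-1) (i+1) ?_ ?_).ne'
    · intro h; apply two_ne hn (i-1); rw [e, h]
    · rw [e]; exact one_ne hn i

/-- A nonsingular nonnegative matrix cannot send the relative interior of an edge to a vertex. -/
theorem PolyData.E_not_V (P : PolyData n X f K) (hn : 5 ≤ n) (hB : KNonneg K B)
    (hdet : B.det ≠ 0) {i j : Fin (n+1)} {y : Fin 3 → ℝ} (hy : IsE X i y)
    (h : IsV X j (B *ᵥ y)) : False := by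
  obtain ⟨p, hp⟩ := P.extreme hn h (hB _ (P.X_mem i)) (P.Dom_map hB (P.E_dom0 hy))
  obtain ⟨q, hq⟩ := P.extreme hn h (hB _ (P.X_mem (i+1))) (P.Dom_map hB (P.E_dom1 hy))
  have h1 : q • X i + (-p) • X (i+1) = 0 := by
    apply mulVec_inj hdet
    rw [Matrix.mulVec_add, Matrix.mulVec_smul, Matrix.mulVec_smul, hp, hq, Matrix.mulVec_zero]
    module
  have h2 := (P.X_indep hn i h1).2
  have h3 : X i = 0 := by
    apply mulVec_inj hdet
    rw [hp, Matrix.mulVec_zero, neg_eq_zero.1 h2, zero_smul]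
  exact P.X_ne hn i h3

theorem PolyData.structure_thm (P : PolyData n X f K) (hn : 5 ≤ n) (hB : KPrimitive K B)
    {j0 : Fin (n+1)} (ho : ∀ k ≤ 2 * n, ∃ i, f i ((B ^ k) *ᵥ X j0) = 0) :
    ∃ l e : Fin (n+1), (e = 1 ∨ e = -1) ∧
      ∀ i, i ≠ l → ∃ c : ℝ, 0 < c ∧ B *ᵥ X i = c • X (i + e) := by
  have hdet := P.det_ne hn hB ho
  have hnn := hB.1
  set v : ℕ → (Fin 3 → ℝ) := fun k => (B ^ k) *ᵥ X j0 with hv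
  have hvK : ∀ k, v k ∈ K := fun k => pow_KNonneg hB.1 _ _ (P.X_mem j0)
  have hv0 : ∀ k, v k ≠ 0 := fun k => P.prim_ne hB (P.X_mem j0) (P.X_ne hn j0) k
  have hvv : ∀ k d, (B ^ d) *ᵥ v k = v (d + k) := by
    intro k d
    simp only [hv, pow_add, Matrix.mulVec_mulVec]
  have hvs : ∀ k, B *ᵥ v k = v (k+1) := by
    intro k
    have := hvv k 1
    rwa [pow_one, add_comm] at this
  -- no return in the orbit
  have hnr : ∀ a b, a < b → a ≤ 2 * n → Dom K (v a) (v b) → False := by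
    intro a b hab ha hd
    obtain ⟨i, hi⟩ := ho a ha
    apply P.noreturn hB (hvK a) (hv0 a) hi (d := b - a) (by omega)
    rw [hvv, Nat.sub_add_cancel hab.le]
    exact hd
  have hVinj : ∀ a b j, a ≤ 2 * n → b ≤ 2 * n → IsV X j (v a) → IsV X j (v b) → a = b := by
    intro a b j ha hb h1 h2
    rcases lt_trichotomy a b with h | h | h
    · exact (hnr a b h ha (P.Dom_trans (P.V_dom h1) (P.dom_V h2))).elim
    · exact h
    · exact (hnr b a h hb (P.Dom_trans (P.V_dom h2) (P.dom_V h1))).elim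
  have hEinj : ∀ a b j, a ≤ 2 * n → b ≤ 2 * n → IsE X j (v a) → IsE X j (v b) → a = b := by
    intro a b j ha hb h1 h2
    rcases lt_trichotomy a b with h | h | h
    · exact (hnr a b h ha (P.E_dom_E h1 h2)).elim
    · exact h
    · exact (hnr b a h hb (P.E_dom_E h2 h1)).elim
  have hcl : ∀ k ≤ 2 * n, (∃ j, IsV X j (v k)) ∨ (∃ j, IsE X j (v k)) := by
    intro k hk
    obtain ⟨i, hi⟩ := ho k hk
    exact P.classify hn (hvK k) (hv0 k) hi
  -- first time not a vertex
  have hex : ∃ k, k ≤ n + 1 ∧ ¬ ∃ j, IsV X j (v k) := by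
    by_contra hc
    push Not at hc
    have hc' : ∀ k : Fin (n+2), ∃ j, IsV X j (v k) := fun k => hc k (by omega)
    choose s hs using hc'
    have hinj : Function.Injective s := by
      intro a b hab
      have h2 := hs b
      rw [← hab] at h2
      exact Fin.ext (hVinj a b (s a) (by omega) (by omega) (hs a) h2)
    have := Fintype.card_le_of_injective s hinj
    simp at this
  classical
  obtain ⟨a, ha, hmin⟩ : ∃ a, (a ≤ n + 1 ∧ ¬ ∃ j, IsV X j (v a)) ∧
      ∀ k < a, ∃ j, IsV X j (v k) := by
    refine ⟨Nat.find hex, Nat.find_spec hex, fun k hk => ?_⟩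
    have h1 := Nat.find_min hex hk
    have h2 := (Nat.find_spec hex).1
    by_contra h3
    exact h1 ⟨by omega, h3⟩
  obtain ⟨han, haV⟩ := ha
  have ha0 : 0 < a := by
    rcases Nat.eq_zero_or_pos a with h | h
    · exfalso
      apply haV
      refine ⟨j0, 1, one_pos, ?_⟩
      simp [hv, h]
    · exact h
  have hE : ∀ d, a + d ≤ 2 * n → ∃ j, IsE X j (v (a + d)) := by
    intro d
    induction d with
    | zero =>
      intro h
      exact (hcl _ h).resolve_left haV
    | succ d ih =>
      intro h
      obtain ⟨i, hi⟩ := ih (by omega)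
      refine (hcl _ h).resolve_left ?_
      rintro ⟨j, hj⟩
      rw [← add_assoc, ← hvs] at hj
      exact P.E_not_V hn hnn hdet hi hj
  have hE' : ∀ k, ∃ j, a ≤ k → k ≤ 2 * n → IsE X j (v k) := by
    intro k
    by_cases h : a ≤ k ∧ k ≤ 2 * n
    · obtain ⟨j, hj⟩ := hE (k - a) (by omega)
      rw [Nat.add_sub_cancel' h.1] at hj
      exact ⟨j, fun _ _ => hj⟩
    · exact ⟨0, fun h1 h2 => absurd ⟨h1, h2⟩ h⟩
  have hV' : ∀ k, ∃ j, k < a → IsV X j (v k) := by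
    intro k
    by_cases h : k < a
    · obtain ⟨j, hj⟩ := hmin k h
      exact ⟨j, fun _ => hj⟩
    · exact ⟨0, fun h1 => absurd h1 h⟩
  choose t ht using hE'
  choose s hs using hV'
  have tinj : ∀ k k', a ≤ k → k ≤ 2 * n → a ≤ k' → k' ≤ 2 * n → t k = t k' → k = k' := by
    intro k k' h1 h2 h3 h4 h
    have h5 := ht k h1 h2
    rw [h] at h5
    exact hEinj k k' _ h2 h4 h5 (ht k' h3 h4)
  have sinj : ∀ k k', k < a → k' < a → s k = s k' → k = k' := by
    intro k k' h1 h2 h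
    have h5 := hs k h1
    rw [h] at h5
    exact hVinj k k' _ (by omega) (by omega) h5 (hs k' h2)
  -- the push-forward principle
  have push : ∀ k p, a ≤ k → k + 1 ≤ 2 * n → p < a → (s p = t k ∨ s p = t k + 1) →
      f (t (k+1)) (v (p+1)) = 0 := by
    intro k p h1 h2 h3 h4
    have hk := ht k h1 (by omega)
    have d1 : Dom K (v k) (X (s p)) := by
      rcases h4 with h4 | h4
      · rw [h4]; exact P.E_dom0 hk
      · rw [h4]; exact P.E_dom1 hk
    have d2 := P.Dom_map hnn (P.Dom_trans d1 (P.dom_V (hs p h3)))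
    rw [hvs, hvs] at d2
    exact P.Dom_zero (hvK _) d2 (P.E_f (ht (k+1) (by omega) h2))
  have claimX : ∀ k, a ≤ k → k ≤ 2 * n → (s (a-1) = t k ∨ s (a-1) = t k + 1) → k = 2 * n := by
    intro k h1 h2 h3
    by_contra h4
    have h5 := push k (a-1) h1 (by omega) (by omega) h3
    rw [Nat.sub_add_cancel ha0] at h5
    have h6 := P.E_zero hn (ht a le_rfl (by omega)) h5
    have := tinj _ _ (by omega) (by omega) (by omega) (by omega) h6
    omega
  -- `a ≥ n`
  have hEcard : 2 * n + 1 - a ≤ n + 1 := by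
    have hinj : Function.Injective (fun k : Fin (2 * n + 1 - a) => t (a + k)) := by
      intro k k' h
      have h1 := k.2
      have h2 := k'.2
      have := tinj _ _ (by omega) (by omega) (by omega) (by omega) h
      exact Fin.ext (by omega)
    simpa using Fintype.card_le_of_injective _ hinj
  -- `a ≠ n`
  have han' : a = n + 1 := by
    by_contra hne
    have hane : a = n := by omega
    have hinj : Function.Injective (fun k : Fin (n+1) => t (a + k)) := by
      intro k k' h
      have h1 := k.2
      have h2 := k'.2
      have := tinj _ _ (by omega) (by omega) (by omega) (by omega) h
      exact Fin.ext (by omega)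
    have hsurj := Finite.surjective_of_injective hinj
    obtain ⟨k1, hk1⟩ := hsurj (s (a-1))
    obtain ⟨k2, hk2⟩ := hsurj (s (a-1) - 1)
    have h1 := k1.2
    have h2 := k2.2
    simp only at hk1 hk2
    have e1 := claimX (a + k1) (by omega) (by omega) (Or.inl hk1.symm)
    have e2 := claimX (a + k2) (by omega) (by omega) (Or.inr (by rw [hk2]; abel))
    rw [e1] at hk1
    rw [e2, hk1] at hk2
    apply one_ne hn (s (a-1) - 1)
    rw [← hk2]
    nth_rewrite 1 [hk2]
    abel
  subst han'
  -- `s` is a bijection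
  have ssurj : ∀ i, ∃ k, k < n + 1 ∧ s k = i := by
    have hinj : Function.Injective (fun k : Fin (n+1) => s k) := by
      intro k k' h
      exact Fin.ext (sinj _ _ k.2 k'.2 h)
    intro i
    obtain ⟨k, hk⟩ := Finite.surjective_of_injective hinj i
    exact ⟨k, k.2, hk⟩
  obtain ⟨p, hp, hpt⟩ := ssurj (t (n+1))
  obtain ⟨q, hq, hqt⟩ := ssurj (t (n+1) + 1)
  have hpq : p ≠ q := by
    intro h
    rw [h, hqt] at hpt
    exact one_ne hn _ hpt
  have chain : ∀ p, p < n + 1 → (s p = t (n+1) ∨ s p = t (n+1) + 1) → ∀ j, j ≤ n - 1 →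
      p + j < n + 1 ∧ (s (p+j) = t (n+1+j) ∨ s (p+j) = t (n+1+j) + 1) := by
    intro p hp h0 j
    induction j with
    | zero => intro _; exact ⟨hp, h0⟩
    | succ j ih =>
      intro hj
      obtain ⟨h1, h2⟩ := ih (by omega)
      have h3 : p + j ≠ n := by
        intro h
        rw [h] at h2
        have := claimX (n+1+j) (by omega) (by omega) h2
        omega
      have h4 := push (n+1+j) (p+j) (by omega) (by omega) h1 h2
      refine ⟨by omega, ?_⟩
      have h5 := P.Dom_zero (P.X_mem _) (P.V_dom (hs (p+j+1) (by omega))) h4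
      exact P.zero_cases h5
  have hp1 := (chain p hp (Or.inl hpt) (n-1) le_rfl).1
  have hq1 := (chain q hq (Or.inr hqt) (n-1) le_rfl).1
  have hadj : ∀ j, j + 1 < n + 1 → s (j+1) = s j + 1 ∨ s j = s (j+1) + 1 := by
    intro j hj
    have hne : s j ≠ s (j+1) := by
      intro h
      have := sinj _ _ (by omega) (by omega) h
      omega
    have c0 : s j = t (n+1+j) ∨ s j = t (n+1+j) + 1 := by
      have : p = 0 ∨ q = 0 := by omega
      rcases this with h | h
      · have := (chain p hp (Or.inl hpt) j (by omega)).2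
        rwa [h, zero_add] at this
      · have := (chain q hq (Or.inr hqt) j (by omega)).2
        rwa [h, zero_add] at this
    have c1 : s (j+1) = t (n+1+j) ∨ s (j+1) = t (n+1+j) + 1 := by
      have : p = 1 ∨ q = 1 := by omega
      rcases this with h | h
      · have := (chain p hp (Or.inl hpt) j (by omega)).2
        rwa [h, add_comm 1 j] at this
      · have := (chain q hq (Or.inr hqt) j (by omega)).2
        rwa [h, add_comm 1 j] at this
    rcases c0 with c0 | c0 <;> rcases c1 with c1 | c1
    · exact absurd (c0.trans c1.symm) hne
    · left; rw [c0, c1]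
    · right; rw [c0, c1]
    · exact absurd (c0.trans c1.symm) hne
  have hconst : ∃ e : Fin (n+1), (e = 1 ∨ e = -1) ∧ ∀ j, j + 1 < n + 1 → s (j+1) = s j + e := by
    rcases hadj 0 (by omega) with h0 | h0
    · refine ⟨1, Or.inl rfl, fun j => ?_⟩
      induction j with
      | zero => intro _; exact h0
      | succ j ih =>
        intro hj
        have h1 := ih (by omega)
        rcases hadj (j+1) hj with h2 | h2
        · exact h2
        · exfalso
          rw [h1] at h2
          have := sinj _ _ (by omega) (by omega) (add_right_cancel h2)
          omega
    · refine ⟨-1, Or.inr rfl, fun j => ?_⟩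
      induction j with
      | zero => intro _; rw [h0]; abel
      | succ j ih =>
        intro hj
        have h1 := ih (by omega)
        rcases hadj (j+1) hj with h2 | h2
        · exfalso
          rw [h1, neg_add_cancel_right] at h2
          have := sinj _ _ (by omega) (by omega) h2
          omega
        · rw [h2]; abel
  obtain ⟨e, he, hse⟩ := hconst
  refine ⟨s n, e, he, fun i hi => ?_⟩
  obtain ⟨k, hk, rfl⟩ := ssurj i
  have hkn : k ≠ n := by rintro rfl; exact hi rfl
  obtain ⟨c, hc, h1⟩ := hs k hk
  obtain ⟨c', hc', h2⟩ := hs (k+1) (by omega)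
  refine ⟨c⁻¹ * c', by positivity, ?_⟩
  rw [← hse k (by omega), ← smul_smul, ← h2, ← hvs, h1, Matrix.mulVec_smul, smul_smul,
    inv_mul_cancel₀ hc.ne', one_smul]

end PolyLemmas

/-- The `3 × 3` determinant of three vectors. -/
def det3 (a b c : Fin 3 → ℝ) : ℝ :=
  a 0 * (b 1 * c 2 - b 2 * c 1) - a 1 * (b 0 * c 2 - b 2 * c 0) + a 2 * (b 0 * c 1 - b 1 * c 0)

/-- `det3` as a linear functional of its last argument. -/
def det3L (a b : Fin 3 → ℝ) : (Fin 3 → ℝ) →ₗ[ℝ] ℝ where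
  toFun c := det3 a b c
  map_add' x y := by simp only [det3, Pi.add_apply]; ring
  map_smul' c x := by simp only [det3, Pi.smul_apply, smul_eq_mul, RingHom.id_apply]; ring

theorem det3L_apply (a b c : Fin 3 → ℝ) : det3L a b c = det3 a b c := rfl

theorem det3_rot (a b c : Fin 3 → ℝ) : det3 a b c = det3 b c a := by
  simp only [det3]; ring

theorem cramer3 (a b c y : Fin 3 → ℝ) :
    det3 a b c • y = det3 y b c • a + det3 a y c • b + det3 a b y • c := by
  ext i
  fin_cases i <;> simp [det3] <;> ring

theorem ConeGen_add {N : ℕ} {X : Fin N → Fin 3 → ℝ} {x y : Fin 3 → ℝ} (hx : x ∈ ConeGen X)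
    (hy : y ∈ ConeGen X) : x + y ∈ ConeGen X := by
  obtain ⟨c, hc, rfl⟩ := hx
  obtain ⟨d, hd, rfl⟩ := hy
  refine ⟨fun j => c j + d j, fun j => add_nonneg (hc j) (hd j), ?_⟩
  rw [← Finset.sum_add_distrib]
  simp only [add_smul]

theorem ConeGen_single {N : ℕ} {X : Fin N → Fin 3 → ℝ} {a : ℝ} (ha : 0 ≤ a) (j : Fin N) :
    a • X j ∈ ConeGen X := by
  refine ⟨fun i => if i = j then a else 0, fun i => ?_, ?_⟩
  · dsimp only; split_ifs <;> simp [ha]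
  · simp [ite_smul]

theorem ConeGen_smul {N : ℕ} {X : Fin N → Fin 3 → ℝ} {a : ℝ} (ha : 0 ≤ a) {x : Fin 3 → ℝ}
    (hx : x ∈ ConeGen X) : a • x ∈ ConeGen X := by
  obtain ⟨c, hc, rfl⟩ := hx
  refine ⟨fun j => a * c j, fun j => mul_nonneg ha (hc j), ?_⟩
  rw [Finset.smul_sum]
  simp only [smul_smul]

theorem polyData_of_convex (n : ℕ) (hn : 5 ≤ n) (x : ℕ → Fin 3 → ℝ)
    (hd : ∀ i j k, i < j → j < k → k < n + 1 → 0 < det3 (x i) (x j) (x k)) :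
    PolyData n (fun i : Fin (n+1) => x i.val)
      (fun i => det3L (x i.val) (x (i+1).val)) (ConeGen (fun i : Fin (n+1) => x i.val)) := by
  set X : Fin (n+1) → Fin 3 → ℝ := fun i => x i.val with hX
  set f : Fin (n+1) → ((Fin 3 → ℝ) →ₗ[ℝ] ℝ) := fun i => det3L (x i.val) (x (i+1).val) with hf
  have f0 : ∀ i, f i (X i) = 0 := by
    intro i; simp only [hf, hX, det3L_apply, det3]; ring
  have f1 : ∀ i, f i (X (i+1)) = 0 := by
    intro i; simp only [hf, hX, det3L_apply, det3]; ring
  have fpos : ∀ i j, j ≠ i → j ≠ i + 1 → 0 < f i (X j) := by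
    intro i j h1 h2
    have h1' : j.val ≠ i.val := fun h => h1 (Fin.ext h)
    have h2' : j.val ≠ (i+1).val := fun h => h2 (Fin.ext h)
    have hj := j.2
    have hi := i.2
    simp only [hf, hX, det3L_apply]
    rw [Fin.val_add_one] at h2' ⊢
    split_ifs at h2' ⊢ with h
    · rw [h] at h1' ⊢
      rw [Fin.val_last] at h1' ⊢
      rw [det3_rot]
      exact hd _ _ _ (by omega) (by omega) (by omega)
    · have h' : i.val ≠ n := fun hh => h (Fin.ext (by rw [hh, Fin.val_last]))
      rcases lt_or_gt_of_ne h1' with h3 | h3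
      · rw [← det3_rot]
        exact hd _ _ _ (by omega) (by omega) (by omega)
      · exact hd _ _ _ (by omega) (by omega) (by omega)
  have fnn : ∀ i j, 0 ≤ f i (X j) := by
    intro i j
    by_cases h1 : j = i
    · rw [h1, f0]
    by_cases h2 : j = i + 1
    · rw [h2, f1]
    exact (fpos i j h1 h2).le
  have memK : ∀ y, y ∈ ConeGen X ↔ ∀ i, 0 ≤ f i y := by
    intro y
    constructor
    · rintro ⟨c, hc, rfl⟩ i
      rw [map_sum]
      apply Finset.sum_nonneg
      intro j _
      rw [map_smul]
      exact mul_nonneg (hc j) (fnn i j)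
    · intro h
      have hk0 : ∃ k, 1 ≤ k ∧ det3 (x 0) (x (k+1)) y ≤ 0 := by
        refine ⟨n - 1, by omega, ?_⟩
        have h1 := h (Fin.last n)
        simp only [hf, det3L_apply, Fin.val_last, Fin.last_add_one, Fin.val_zero] at h1
        rw [Nat.sub_add_cancel (by omega)]
        have : det3 (x 0) (x n) y = - det3 (x n) (x 0) y := by simp only [det3]; ring
        linarith
      classical
      obtain ⟨k, ⟨hk1, hk2⟩, hk3, hkn⟩ : ∃ k, (1 ≤ k ∧ det3 (x 0) (x (k+1)) y ≤ 0) ∧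
          0 ≤ det3 (x 0) (x k) y ∧ k < n := by
        refine ⟨Nat.find hk0, Nat.find_spec hk0, ?_, ?_⟩
        · have h1 := (Nat.find_spec hk0).1
          rcases h1.eq_or_lt with h2 | h2
          · rw [← h2]
            have h3 := h 0
            simp only [hf, det3L_apply] at h3
            rw [Fin.val_add_one, if_neg] at h3
            · simpa using h3
            · intro h4
              have := congrArg Fin.val h4
              simp at this
              omega
          · have h3 := Nat.find_min hk0 (m := Nat.find hk0 - 1) (by omega)
            rw [Nat.sub_add_cancel h1] at h3
            by_contra h4
            push Not at h4
            exact h3 ⟨by omega, h4.le⟩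
        · have h1 : Nat.find hk0 ≤ n - 1 := by
            apply Nat.find_le
            refine ⟨by omega, ?_⟩
            have h1 := h (Fin.last n)
            simp only [hf, det3L_apply, Fin.val_last, Fin.last_add_one, Fin.val_zero] at h1
            rw [Nat.sub_add_cancel (by omega)]
            have : det3 (x 0) (x n) y = - det3 (x n) (x 0) y := by simp only [det3]; ring
            linarith
          omega
      have hfk := h ⟨k, by omega⟩
      simp only [hf, det3L_apply] at hfk
      rw [Fin.val_add_one, if_neg (by
        intro h4
        have := congrArg Fin.val h4
        simp at this
        omega)] at hfk
      simp only at hfk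
      have hD := hd 0 k (k+1) (by omega) (by omega) (by omega)
      have hy : y = (det3 (x 0) (x k) (x (k+1)))⁻¹ • (det3 y (x k) (x (k+1)) • x 0
          + det3 (x 0) y (x (k+1)) • x k + det3 (x 0) (x k) y • x (k+1)) := by
        rw [← cramer3, smul_smul, inv_mul_cancel₀ hD.ne', one_smul]
      rw [hy]
      apply ConeGen_smul (inv_nonneg.2 hD.le)
      apply ConeGen_add (ConeGen_add _ _) _
      · exact ConeGen_single (X := X) (by rw [det3_rot]; exact hfk) 0
      · refine ConeGen_single (X := X) ?_ ⟨k, by omega⟩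
        have : det3 (x 0) y (x (k+1)) = - det3 (x 0) (x (k+1)) y := by simp only [det3]; ring
        linarith
      · exact ConeGen_single (X := X) hk3 ⟨k+1, by omega⟩
  refine ⟨memK, fun y hy => hy, f0, f1, fpos, ?_⟩
  intro y
  constructor
  · intro hy i
    have hw : 0 < f i (X (i+1+1)) := fpos i (i+1+1) (two_ne hn i) (one_ne hn (i+1))
    have hcont : Filter.Tendsto (fun ε : ℝ => y - ε • X (i+1+1)) (nhds 0) (nhds y) := by
      have : Continuous (fun ε : ℝ => y - ε • X (i+1+1)) := by fun_prop
      have h := this.tendsto 0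
      simpa using h
    have hev := hcont.eventually (mem_interior_iff_mem_nhds.1 hy)
    have hev2 : ∀ᶠ ε : ℝ in nhdsWithin 0 (Set.Ioi 0), y - ε • X (i+1+1) ∈ ConeGen X :=
      hev.filter_mono nhdsWithin_le_nhds
    obtain ⟨ε, h1, h2⟩ := (hev2.and self_mem_nhdsWithin).exists
    have h3 := (memK _).1 h1 i
    rw [map_sub, map_smul, smul_eq_mul] at h3
    have h4 := mul_pos (show 0 < ε from h2) hw
    linarith
  · intro h
    have ho : IsOpen {z : Fin 3 → ℝ | ∀ i, 0 < f i z} := by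
      rw [Set.ofPred_forall]
      apply isOpen_iInter_of_finite
      intro i
      exact isOpen_lt continuous_const (LinearMap.continuous_of_finiteDimensional (f i))
    refine interior_maximal ?_ ho h
    intro z hz
    exact (memK z).2 (fun i => (hz i).le)

/-- Four eigenvectors in general position force a scalar matrix. -/
theorem scalar_of_four {C : Matrix (Fin 3) (Fin 3) ℝ} {a b c d : Fin 3 → ℝ} {p q s t : ℝ}
    (ha : C *ᵥ a = p • a) (hb : C *ᵥ b = q • b) (hc : C *ᵥ c = s • c) (hd : C *ᵥ d = t • d)
    (h0 : det3 a b c ≠ 0) (h1 : det3 d b c ≠ 0) (h2 : det3 a d c ≠ 0) (h3 : det3 a b d ≠ 0) :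
    ∀ y, C *ᵥ y = t • y := by
  have e := cramer3 a b c d
  have e2 := congrArg (fun z => C *ᵥ z) e
  simp only [Matrix.mulVec_add, Matrix.mulVec_smul, ha, hb, hc, hd] at e2
  have e3 : ((p - t) * det3 d b c) • a + ((q - t) * det3 a d c) • b
      + ((s - t) * det3 a b d) • c = 0 := by
    have : det3 a b c • t • d = t • (det3 a b c • d) := smul_comm _ _ _
    rw [this, e] at e2
    have e4 := sub_eq_zero.2 e2.symm
    rw [← e4]
    module
  have k1 : (p - t) * det3 d b c * det3 a b c = 0 := by
    have := congrArg (fun z => det3 z b c) e3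
    have h5 : ∀ u v w : ℝ, det3 (u • a + v • b + w • c) b c = u * det3 a b c := by
      intro u v w; simp [det3]; ring
    rw [h5] at this
    rw [this]; simp [det3]
  have k2 : (q - t) * det3 a d c * det3 a b c = 0 := by
    have := congrArg (fun z => det3 a z c) e3
    have h5 : ∀ u v w : ℝ, det3 a (u • a + v • b + w • c) c = v * det3 a b c := by
      intro u v w; simp [det3]; ring
    rw [h5] at this
    rw [this]; simp [det3]
  have k3 : (s - t) * det3 a b d * det3 a b c = 0 := by
    have := congrArg (fun z => det3 a b z) e3
    have h5 : ∀ u v w : ℝ, det3 a b (u • a + v • b + w • c) = w * det3 a b c := by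
      intro u v w; simp [det3]; ring
    rw [h5] at this
    rw [this]; simp [det3]
  have hp : p = t := by
    have := (mul_eq_zero.1 ((mul_eq_zero.1 k1).resolve_right h0)).resolve_right h1
    linarith
  have hq : q = t := by
    have := (mul_eq_zero.1 ((mul_eq_zero.1 k2).resolve_right h0)).resolve_right h2
    linarith
  have hs : s = t := by
    have := (mul_eq_zero.1 ((mul_eq_zero.1 k3).resolve_right h0)).resolve_right h3
    linarith
  subst hp hq hs
  intro y
  have hy : y = (det3 a b c)⁻¹ • (det3 y b c • a + det3 a y c • b + det3 a b y • c) := by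
    rw [← cramer3, smul_smul, inv_mul_cancel₀ h0, one_smul]
  rw [hy]
  simp only [Matrix.mulVec_add, Matrix.mulVec_smul, ha, hb, hc]
  module

theorem scalar_of_many (n : ℕ) (hn : 5 ≤ n) (x : ℕ → Fin 3 → ℝ)
    (hd : ∀ i j k, i < j → j < k → k < n + 1 → 0 < det3 (x i) (x j) (x k))
    {C : Matrix (Fin 3) (Fin 3) ℝ} (l l' : ℕ)
    (hC : ∀ i < n + 1, i ≠ l → i ≠ l' → ∃ c : ℝ, 0 < c ∧ C *ᵥ x i = c • x i) :
    ∃ c : ℝ, 0 < c ∧ C = c • (1 : Matrix (Fin 3) (Fin 3) ℝ) := by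
  set S := ((Finset.range (n+1)).erase l).erase l' with hS
  have hcard : 4 ≤ S.card := by
    have h1 := Finset.pred_card_le_card_erase (s := Finset.range (n+1)) (a := l)
    have h2 := Finset.pred_card_le_card_erase (s := (Finset.range (n+1)).erase l) (a := l')
    rw [Finset.card_range] at h1
    rw [hS]
    omega
  obtain ⟨T, hTS, hT⟩ := Finset.exists_subset_card_eq hcard
  have hmem : ∀ i : Fin 4, T.orderEmbOfFin hT i ∈ S := fun i =>
    hTS (Finset.orderEmbOfFin_mem T hT i)
  have hlt : ∀ i j : Fin 4, i < j → T.orderEmbOfFin hT i < T.orderEmbOfFin hT j := fun i j h =>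
    (T.orderEmbOfFin hT).strictMono h
  set g := T.orderEmbOfFin hT with hg
  have hC' : ∀ i : Fin 4, ∃ c : ℝ, 0 < c ∧ C *ᵥ x (g i) = c • x (g i) := by
    intro i
    have := hmem i
    simp only [hS, Finset.mem_erase, Finset.mem_range] at this
    exact hC _ this.2.2 this.2.1 this.1
  have hb : ∀ i, g i < n + 1 := by
    intro i
    have := hmem i
    simp only [hS, Finset.mem_erase, Finset.mem_range] at this
    exact this.2.2
  have hd' : ∀ i j k : Fin 4, i < j → j < k → 0 < det3 (x (g i)) (x (g j)) (x (g k)) :=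
    fun i j k h1 h2 => hd _ _ _ (hlt _ _ h1) (hlt _ _ h2) (hb k)
  obtain ⟨c0, _, h0⟩ := hC' 0
  obtain ⟨c1, _, h1⟩ := hC' 1
  obtain ⟨c2, _, h2⟩ := hC' 2
  obtain ⟨c3, hc3, h3⟩ := hC' 3
  refine ⟨c3, hc3, ?_⟩
  have := scalar_of_four h0 h1 h2 h3 (hd' 0 1 2 (by decide) (by decide)).ne'
    (by rw [det3_rot]; exact (hd' 1 2 3 (by decide) (by decide)).ne')
    (by
      have h := hd' 0 2 3 (by decide) (by decide)
      have e : det3 (x (g 0)) (x (g 3)) (x (g 2)) = - det3 (x (g 0)) (x (g 2)) (x (g 3)) := by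
        simp only [det3]; ring
      rw [e]
      exact (neg_lt_zero.2 h).ne)
    (hd' 0 1 3 (by decide) (by decide)).ne'
  apply Matrix.ext_of_mulVec_single
  intro i
  rw [this, Matrix.smul_mulVec, Matrix.one_mulVec]

theorem abstract_main (n : ℕ) (hn : 5 ≤ n) (x : ℕ → Fin 3 → ℝ)
    (hd : ∀ i j k, i < j → j < k → k < n + 1 → 0 < det3 (x i) (x j) (x k))
    (A B : Matrix (Fin 3) (Fin 3) ℝ) (hA : ∀ i < n, A *ᵥ x i = x (i+1)) (hdA : A.det ≠ 0)
    (α β : ℝ) (hα : 0 < α) (hβ : 0 < β) (hAn : A *ᵥ x n = α • x 0 + β • x 1)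
    (hB : KPrimitive (ConeGen (fun i : Fin (n+1) => x i.val)) B)
    (hγ : expnt (ConeGen (fun i : Fin (n+1) => x i.val)) B = 2 * n + 1) :
    ∃ c : ℝ, 0 < c ∧ B = c • A := by
  have P := polyData_of_convex n hn x hd
  obtain ⟨j0, ho⟩ := P.orbit hn hB hγ
  have hdB := P.det_ne hn hB ho
  obtain ⟨l, e, he, hle⟩ := P.structure_thm hn hB ho
  have hval : ∀ i (h : i < n), ((⟨i, by omega⟩ : Fin (n+1)) + 1).val = i + 1 := by
    intro i h
    rw [Fin.val_add_one, if_neg]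
    intro h4
    have := congrArg Fin.val h4
    simp at this
    omega
  rcases he with rfl | rfl
  · have hC : ∀ i < n + 1, i ≠ l.val → i ≠ n →
        ∃ c : ℝ, 0 < c ∧ (A⁻¹ * B) *ᵥ x i = c • x i := by
      intro i hi hil hin
      obtain ⟨c, hc, h1⟩ := hle ⟨i, hi⟩ (fun h => hil (by rw [← h]))
      refine ⟨c, hc, ?_⟩
      simp only [hval i (by omega)] at h1
      rw [← Matrix.mulVec_mulVec, h1, ← hA i (by omega), Matrix.mulVec_smul,
        Matrix.mulVec_mulVec, Matrix.nonsing_inv_mul _ (isUnit_iff_ne_zero.2 hdA),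
        Matrix.one_mulVec]
    obtain ⟨c, hc, h⟩ := scalar_of_many n hn x hd _ _ hC
    refine ⟨c, hc, ?_⟩
    have := congrArg (fun M => A * M) h
    rw [← Matrix.mul_assoc, Matrix.mul_nonsing_inv _ (isUnit_iff_ne_zero.2 hdA),
      Matrix.one_mul, Matrix.mul_smul, Matrix.mul_one] at this
    exact this
  · exfalso
    have hC : ∀ i < n + 1, i ≠ n → i ≠ (l - 1).val →
        ∃ c : ℝ, 0 < c ∧ (B * A) *ᵥ x i = c • x i := by
      intro i hi hin hil
      obtain ⟨c, hc, h1⟩ := hle (⟨i, hi⟩ + 1) (fun h => hil (by rw [← h]; simp))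
      refine ⟨c, hc, ?_⟩
      simp only [hval i (by omega), add_neg_cancel_right] at h1
      rw [← Matrix.mulVec_mulVec, hA i (by omega), h1]
    obtain ⟨c, hc, h⟩ := scalar_of_many n hn x hd _ _ hC
    have h1 : B *ᵥ (α • x 0 + β • x 1) = c • x n := by
      rw [← hAn, Matrix.mulVec_mulVec, h, Matrix.smul_mulVec, Matrix.one_mulVec]
    have h01 := hval 0 (by omega)
    refine P.E_not_V (i := ⟨0, by omega⟩) (j := Fin.last n) hn hB.1 hdB
      (y := α • x 0 + β • x 1) ?_ ?_
    · refine ⟨α, β, hα, hβ, ?_⟩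
      simp only [h01]
    · exact ⟨c, hc, by simpa using h1⟩

/-- The normalized orientation determinant of three points on the spiral. -/
def Hfun (r θ : ℝ) (a b : ℕ) : ℝ :=
  Real.sin (a * θ) + r ^ (a + b) * Real.sin (b * θ) - r ^ b * Real.sin (((a + b : ℕ) : ℝ) * θ)

theorem det_xvec (r θ : ℝ) (i a b : ℕ) :
    det3 (xvec r θ i) (xvec r θ (i + a)) (xvec r θ (i + a + b))
      = r ^ (2 * i + a) * Hfun r θ a b := by
  have e1 : (a : ℝ) * θ = ((i + a : ℕ) : ℝ) * θ - (i : ℝ) * θ := by push_cast; ring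
  have e2 : (b : ℝ) * θ = ((i + a + b : ℕ) : ℝ) * θ - ((i + a : ℕ) : ℝ) * θ := by
    push_cast; ring
  have e3 : ((a + b : ℕ) : ℝ) * θ = ((i + a + b : ℕ) : ℝ) * θ - (i : ℝ) * θ := by
    push_cast; ring
  unfold Hfun
  rw [e1, e2, e3, Real.sin_sub, Real.sin_sub, Real.sin_sub]
  simp only [det3, xvec, Matrix.cons_val_zero, Matrix.cons_val_one, Matrix.cons_val]
  ring

theorem sin_subadd {x y : ℝ} (hx : 0 < x) (hy : 0 < y) (h : x + y ≤ π) :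
    Real.sin (x + y) < Real.sin x + Real.sin y := by
  have sx : 0 < Real.sin x := Real.sin_pos_of_pos_of_lt_pi hx (by linarith)
  have sy : 0 < Real.sin y := Real.sin_pos_of_pos_of_lt_pi hy (by linarith)
  have cx : Real.cos x < 1 := by
    rw [← Real.cos_zero]
    exact Real.cos_lt_cos_of_nonneg_of_le_pi le_rfl (by linarith) hx
  have cy : Real.cos y < 1 := by
    rw [← Real.cos_zero]
    exact Real.cos_lt_cos_of_nonneg_of_le_pi le_rfl (by linarith) hy
  rw [Real.sin_add]
  nlinarith

theorem amgm_pow {r : ℝ} (hr : 0 < r) (a b : ℕ) :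
    ((a : ℝ) + b) * r ^ b ≤ a + b * r ^ (a + b) := by
  set L := Real.log r with hL
  have e1 : r ^ a = Real.exp (a * L) := by rw [Real.exp_nat_mul, hL, Real.exp_log hr]
  have e2 : r ^ b * Real.exp (-(b * L)) = 1 := by
    have : r ^ b = Real.exp (b * L) := by rw [Real.exp_nat_mul, hL, Real.exp_log hr]
    rw [this, ← Real.exp_add]; simp
  have h1 := Real.add_one_le_exp (a * L)
  have h2 := Real.add_one_le_exp (-(b * L))
  rw [← e1] at h1
  have h3 : ((a : ℝ) + b) ≤ a * Real.exp (-(b * L)) + b * r ^ a := by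
    have ha : (0 : ℝ) ≤ a := Nat.cast_nonneg a
    have hb : (0 : ℝ) ≤ b := Nat.cast_nonneg b
    nlinarith [mul_le_mul_of_nonneg_left h1 hb, mul_le_mul_of_nonneg_left h2 ha]
  have h4 := mul_le_mul_of_nonneg_right h3 (pow_pos hr b).le
  calc ((a : ℝ) + b) * r ^ b ≤ _ := h4
    _ = a * (r ^ b * Real.exp (-(b * L))) + b * r ^ (a + b) := by rw [pow_add]; ring
    _ = _ := by rw [e2, mul_one]

theorem sin_frac {θ : ℝ} (hθ : 0 < θ) {a b : ℕ} (ha : 0 < a) (hb : 0 < b)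
    (h : ((a : ℝ) + b) * θ ≤ π) :
    (a : ℝ) / (a + b) * Real.sin (((a : ℝ) + b) * θ) < Real.sin (a * θ) := by
  have ha' : (0 : ℝ) < a := by exact_mod_cast ha
  have hb' : (0 : ℝ) < b := by exact_mod_cast hb
  have hS : 0 < ((a : ℝ) + b) * θ := by positivity
  have := strictConcaveOn_sin_Icc.2 (show (0:ℝ) ∈ Set.Icc 0 π from ⟨le_rfl, Real.pi_pos.le⟩)
    (show ((a:ℝ)+b)*θ ∈ Set.Icc 0 π from ⟨hS.le, h⟩) hS.ne
    (show (0:ℝ) < (b:ℝ)/(a+b) by positivity) (show (0:ℝ) < (a:ℝ)/(a+b) by positivity)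
    (by field_simp; ring)
  simp only [smul_eq_mul, Real.sin_zero, mul_zero, zero_add] at this
  have e : (a : ℝ) / (a + b) * (((a : ℝ) + b) * θ) = a * θ := by field_simp
  rwa [e] at this

section Spiral

variable {n : ℕ} {θ r : ℝ}

theorem H_case1 (hθ : 0 < θ) (hr : 0 < r) {a b : ℕ} (ha : 0 < a) (hb : 0 < b)
    (h : ((a : ℝ) + b) * θ ≤ π) : 0 < Hfun r θ a b := by
  have ha' : (0 : ℝ) < a := by exact_mod_cast ha
  have hb' : (0 : ℝ) < b := by exact_mod_cast hb
  have h1 := sin_frac hθ ha hb h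
  have h2 := sin_frac hθ hb ha (by linarith)
  have h3 := amgm_pow hr a b
  have hs : 0 ≤ Real.sin (((a : ℝ) + b) * θ) :=
    Real.sin_nonneg_of_nonneg_of_le_pi (by positivity) h
  unfold Hfun
  push_cast
  rw [add_comm (b : ℝ) a] at h2
  set S := Real.sin (((a : ℝ) + b) * θ)
  have h4 : r ^ (a + b) * ((b : ℝ) / (a + b) * S) < r ^ (a + b) * Real.sin (b * θ) :=
    mul_lt_mul_of_pos_left h2 (pow_pos hr _)
  have h5 : 0 ≤ (a + b * r ^ (a + b) - ((a : ℝ) + b) * r ^ b) * (S / (a + b)) :=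
    mul_nonneg (by linarith) (by positivity)
  have h6 : (a + b * r ^ (a + b) - ((a : ℝ) + b) * r ^ b) * (S / (a + b))
      = (a : ℝ) / (a + b) * S + r ^ (a + b) * ((b : ℝ) / (a + b) * S) - r ^ b * S := by
    field_simp
  linarith

theorem H_case2 (hθ : 0 < θ) (hr : 0 < r) {a b : ℕ} (ha : 0 < a) (hb : 0 < b)
    (h : π < ((a : ℝ) + b) * θ) (h' : ((a : ℝ) + b) * θ < 2 * π)
    (hA : a * θ ≤ π) (hB : b * θ ≤ π) : 0 < Hfun r θ a b := by
  have ha' : (0 : ℝ) < a := by exact_mod_cast ha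
  have hb' : (0 : ℝ) < b := by exact_mod_cast hb
  have s1 : 0 ≤ Real.sin (a * θ) := Real.sin_nonneg_of_nonneg_of_le_pi (by positivity) hA
  have s2 : 0 ≤ Real.sin (b * θ) := Real.sin_nonneg_of_nonneg_of_le_pi (by positivity) hB
  have s3 : Real.sin (((a : ℝ) + b) * θ) < 0 := by
    have := Real.sin_pos_of_pos_of_lt_pi (x := ((a : ℝ) + b) * θ - π) (by linarith) (by linarith)
    rw [Real.sin_sub_pi] at this
    linarith
  unfold Hfun
  push_cast
  have h1 := mul_nonneg (pow_pos hr (a + b)).le s2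
  have h2 := mul_pos (pow_pos hr b) (neg_pos.2 s3)
  linarith

theorem H_case3 (hθ : 0 < θ) (hr : 0 < r) (hr1 : r < 1) {a b : ℕ} (ha : 0 < a) (_hb : 0 < b)
    (h' : ((a : ℝ) + b) * θ < 2 * π) (hB : π < b * θ) : 0 < Hfun r θ a b := by
  have ha' : (0 : ℝ) < a := by exact_mod_cast ha
  have e1 : Real.sin (b * θ) = - Real.sin (2 * π - b * θ) := by
    rw [Real.sin_two_pi_sub, neg_neg]
  have e2 : Real.sin (((a : ℝ) + b) * θ) = - Real.sin (2 * π - ((a : ℝ) + b) * θ) := by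
    rw [Real.sin_two_pi_sub, neg_neg]
  have haθ : 0 < (a : ℝ) * θ := by positivity
  have h1 := sin_subadd (x := a * θ) (y := 2 * π - ((a : ℝ) + b) * θ) haθ
    (by linarith) (by linarith)
  have e3 : (a : ℝ) * θ + (2 * π - ((a : ℝ) + b) * θ) = 2 * π - b * θ := by ring
  rw [e3] at h1
  have sp : 0 < Real.sin (2 * π - b * θ) :=
    Real.sin_pos_of_pos_of_lt_pi (by linarith) (by linarith)
  have sa : 0 < Real.sin (a * θ) := Real.sin_pos_of_pos_of_lt_pi haθ (by linarith)
  unfold Hfun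
  push_cast
  rw [e1, e2]
  have p1 : r ^ a ≤ 1 := pow_le_one₀ hr.le hr1.le
  have p2 : r ^ b ≤ 1 := pow_le_one₀ hr.le hr1.le
  have pb := pow_pos hr b
  have q1 : r ^ b * (r ^ a * Real.sin (2 * π - b * θ)) ≤ r ^ b * Real.sin (2 * π - b * θ) :=
    mul_le_mul_of_nonneg_left (by nlinarith) pb.le
  have q2 : r ^ b * Real.sin (a * θ) ≤ Real.sin (a * θ) := by nlinarith
  have q3 := mul_lt_mul_of_pos_left h1 pb
  have q4 : r ^ (a + b) * Real.sin (2 * π - b * θ)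
    = r ^ b * (r ^ a * Real.sin (2 * π - b * θ)) := by rw [pow_add]; ring
  nlinarith

/-- the root equation -/
def RootEq (n : ℕ) (θ r : ℝ) : Prop :=
  Real.sin θ + r ^ (n+1) * Real.sin (n * θ) - r ^ n * Real.sin (((n : ℝ) + 1) * θ) = 0

theorem sins (hn : 5 ≤ n) (h1 : (n : ℝ) * θ < 2 * π) (h2 : 2 * π < ((n : ℝ) + 1) * θ) :
    0 < θ ∧ θ < π / 2 ∧ 0 < Real.sin θ ∧ Real.sin (n * θ) < 0 ∧
      0 < Real.sin (((n : ℝ) + 1) * θ) := by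
  have hn' : (5 : ℝ) ≤ n := by exact_mod_cast hn
  have hpi := Real.pi_pos
  have hθ : 0 < θ := by nlinarith
  have hθ2 : θ < π / 2 := by nlinarith
  refine ⟨hθ, hθ2, Real.sin_pos_of_pos_of_lt_pi hθ (by linarith), ?_, ?_⟩
  · have := Real.sin_pos_of_pos_of_lt_pi (x := 2 * π - n * θ) (by linarith) (by linarith)
    rw [Real.sin_two_pi_sub] at this
    linarith
  · have := Real.sin_pos_of_pos_of_lt_pi (x := ((n : ℝ) + 1) * θ - 2 * π) (by linarith)
      (by linarith)
    rwa [Real.sin_sub_two_pi] at this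

theorem r_lt_one (hn : 5 ≤ n) (h1 : (n : ℝ) * θ < 2 * π) (h2 : 2 * π < ((n : ℝ) + 1) * θ)
    (hroot : RootEq n θ r) : r < 1 := by
  obtain ⟨hθ, hθ2, s1, s2, s3⟩ := sins hn h1 h2
  by_contra hc
  push Not at hc
  have p1 : 1 ≤ r ^ n := one_le_pow₀ hc
  have p2 : 1 ≤ r ^ (n+1) := one_le_pow₀ hc
  have h := sin_subadd (x := 2 * π - n * θ) (y := ((n : ℝ) + 1) * θ - 2 * π) (by linarith)
    (by linarith) (by linarith)
  rw [Real.sin_two_pi_sub, Real.sin_sub_two_pi] at h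
  have e : 2 * π - n * θ + (((n : ℝ) + 1) * θ - 2 * π) = θ := by ring
  rw [e] at h
  unfold RootEq at hroot
  nlinarith

theorem H_base (hn : 5 ≤ n) (hr : 0 < r) (h1 : (n : ℝ) * θ < 2 * π)
    (h2 : 2 * π < ((n : ℝ) + 1) * θ) (hroot : RootEq n θ r) : 0 < Hfun r θ (n - 1) 1 := by
  obtain ⟨hθ, hθ2, s1, s2, s3⟩ := sins hn h1 h2
  unfold RootEq at hroot
  unfold Hfun
  have hc : ((n - 1 : ℕ) : ℝ) = (n : ℝ) - 1 := by
    rw [Nat.cast_sub (by omega)]; simp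
  rw [Nat.sub_add_cancel (by omega), hc, Nat.cast_one, one_mul, pow_one]
  have e1 : ((n : ℝ) - 1) * θ = n * θ - θ := by ring
  have e2 : ((n : ℝ) + 1) * θ = n * θ + θ := by ring
  rw [e2] at hroot s3
  rw [e1]
  rw [Real.sin_add] at hroot s3
  rw [Real.sin_sub]
  have t1 := Real.sin_sq_add_cos_sq θ
  have t2 := Real.sin_sq_add_cos_sq (n * θ)
  rw [pow_succ] at hroot
  set S := Real.sin θ
  set C := Real.cos θ
  set E := Real.sin (n * θ)
  set F := Real.cos (n * θ)
  set R := r ^ n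
  have hD : 0 < E * C + F * S - r * E := by nlinarith
  have key : (E * C - F * S + R * S - r * E) * (E * C + F * S - r * E)
      = E ^ 2 * ((r - C) ^ 2 + S ^ 2) := by
    linear_combination (-S) * hroot - (S ^ 2) * t2
  have hpos : 0 < E ^ 2 * ((r - C) ^ 2 + S ^ 2) := by
    have : 0 < E ^ 2 := by nlinarith
    positivity
  rw [← key] at hpos
  exact (mul_pos_iff_of_pos_right hD).1 hpos

theorem H_one (hn : 5 ≤ n) (hr : 0 < r) (h1 : (n : ℝ) * θ < 2 * π)
    (h2 : 2 * π < ((n : ℝ) + 1) * θ) (hroot : RootEq n θ r) (d : ℕ) :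
    ∀ a : ℕ, a + 1 + d = n → π < a * θ → 0 < Hfun r θ a 1 := by
  obtain ⟨hθ, hθ2, s1, s2, s3⟩ := sins hn h1 h2
  induction d with
  | zero =>
    intro a ha _
    have : a = n - 1 := by omega
    rw [this]
    exact H_base hn hr h1 h2 hroot
  | succ d ih =>
    intro a ha hpi
    have hH := ih (a+1) (by omega) (by push_cast; linarith)
    unfold Hfun at hH ⊢
    push_cast at hH ⊢
    have e1 : (a : ℝ) * θ = (a + 1) * θ - θ := by ring
    have e2 : ((a : ℝ) + 1 + 1) * θ = (a + 1) * θ + θ := by ring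
    have hle : ((a : ℝ) + 1) * θ < 2 * π := by
      have : (a : ℝ) + 1 ≤ n := by exact_mod_cast (by omega : a + 1 ≤ n)
      nlinarith
    have hneg : Real.sin (((a : ℝ) + 1) * θ) < 0 := by
      have := Real.sin_pos_of_pos_of_lt_pi (x := 2 * π - ((a : ℝ) + 1) * θ) (by linarith)
        (by linarith)
      rw [Real.sin_two_pi_sub] at this
      linarith
    rw [e2, Real.sin_add] at hH
    rw [e1, Real.sin_sub]
    rw [one_mul, pow_one] at hH ⊢
    rw [pow_succ] at hH
    have t1 := Real.sin_sq_add_cos_sq θ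
    set Q := Real.sin (((a : ℝ) + 1) * θ)
    set W := Real.cos (((a : ℝ) + 1) * θ)
    set S := Real.sin θ
    set C := Real.cos θ
    set R := r ^ (a + 1)
    have hq : 0 < 1 + r ^ 2 - 2 * r * C := by
      have : 1 + r ^ 2 - 2 * r * C = (r - C) ^ 2 + S ^ 2 := by linear_combination -t1
      rw [this]; positivity
    have hmul : 0 < r * (Q * C - W * S + R * S - r * Q) := by
      have := mul_pos hq (neg_pos.2 hneg)
      nlinarith
    exact (mul_pos_iff_of_pos_right hr).1 (by linarith [mul_comm r (Q * C - W * S + R * S - r * Q)])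

theorem H_pos (hn : 5 ≤ n) (hr : 0 < r) (h1 : (n : ℝ) * θ < 2 * π)
    (h2 : 2 * π < ((n : ℝ) + 1) * θ) (hroot : RootEq n θ r) {a b : ℕ} (ha : 0 < a) (hb : 0 < b)
    (hab : a + b ≤ n) : 0 < Hfun r θ a b := by
  obtain ⟨hθ, hθ2, s1, s2, s3⟩ := sins hn h1 h2
  have hr1 := r_lt_one hn h1 h2 hroot
  have hlt : ∀ c : ℕ, c ≤ n → (c : ℝ) * θ < 2 * π := by
    intro c hc
    have : (c : ℝ) ≤ n := by exact_mod_cast hc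
    nlinarith
  have small : ∀ a b : ℕ, 0 < a → 0 < b → a + b ≤ n → (a : ℝ) * θ ≤ π → 0 < Hfun r θ a b := by
    intro a b ha hb hab haπ
    have h3 := hlt (a + b) hab
    push_cast at h3
    by_cases c1 : ((a : ℝ) + b) * θ ≤ π
    · exact H_case1 hθ hr ha hb c1
    by_cases c2 : (b : ℝ) * θ ≤ π
    · exact H_case2 hθ hr ha hb (not_le.1 c1) h3 haπ c2
    · exact H_case3 hθ hr hr1 ha hb h3 (not_le.1 c2)
  by_cases hA : (a : ℝ) * θ ≤ π
  · exact small a b ha hb hab hA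
  push Not at hA
  have ha2 : 2 ≤ a := by
    by_contra hc
    have : a = 1 := by omega
    rw [this] at hA
    push_cast at hA
    linarith [Real.pi_pos]
  have hdet : ∀ u v : ℕ, det3 (xvec r θ 0) (xvec r θ u) (xvec r θ (u + v))
      = r ^ u * Hfun r θ u v := by
    intro u v
    have := det_xvec r θ 0 u v
    simpa using this
  have first : ∀ k, 2 ≤ k → k ≤ n → 0 < det3 (xvec r θ 0) (xvec r θ 1) (xvec r θ k) := by
    intro k hk hkn
    have := hdet 1 (k - 1)
    rw [show 1 + (k - 1) = k by omega] at this
    rw [this]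
    exact mul_pos (pow_pos hr _) (small 1 (k-1) one_pos (by omega) (by omega)
      (by push_cast; linarith [Real.pi_pos]))
  have main : ∀ b : ℕ, a + (b + 1) ≤ n →
      0 < det3 (xvec r θ 0) (xvec r θ a) (xvec r θ (a + (b + 1))) := by
    intro b
    induction b with
    | zero =>
      intro h
      rw [hdet]
      exact mul_pos (pow_pos hr _) (H_one hn hr h1 h2 hroot (n - (a+1)) a (by omega) hA)
    | succ b ih =>
      intro h
      have i1 := ih (by omega)
      have i2 : 0 < det3 (xvec r θ 0) (xvec r θ (a + (b+1))) (xvec r θ (a + (b + 1) + 1)) := by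
        rw [hdet]
        refine mul_pos (pow_pos hr _)
          (H_one hn hr h1 h2 hroot (n - (a + (b+1) + 1)) _ (by omega) ?_)
        push_cast
        have : (0 : ℝ) ≤ ((b : ℝ) + 1) * θ := by positivity
        linarith
      have f1 := first a ha2 (by omega)
      have f2 := first (a + (b+1)) (by omega) (by omega)
      have f3 := first (a + (b+1) + 1) (by omega) (by omega)
      have pl : ∀ o p k u c : Fin 3 → ℝ, det3 o p k * det3 o u c
          = det3 o p u * det3 o k c + det3 o p c * det3 o u k := by
        intro o p k u c
        simp only [det3]; ring
      have := pl (xvec r θ 0) (xvec r θ 1) (xvec r θ (a + (b+1))) (xvec r θ a)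
        (xvec r θ (a + (b+1) + 1))
      have hp : 0 < det3 (xvec r θ 0) (xvec r θ 1) (xvec r θ (a + (b+1))) *
          det3 (xvec r θ 0) (xvec r θ a) (xvec r θ (a + (b+1) + 1)) := by
        rw [this]
        positivity
      exact (mul_pos_iff_of_pos_left f2).1 hp
  obtain ⟨b', rfl⟩ : ∃ b', b = b' + 1 := ⟨b - 1, by omega⟩
  have := main b' hab
  rw [hdet] at this
  exact (mul_pos_iff_of_pos_left (pow_pos hr _)).1 this

end Spiral

/-- Let `m ≥ 6` and `θ ∈ (2π/m, 2π/(m-1))`, with `r = r_θ` the unique positive real root of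
`g_θ`.  If `B` is `K_θ`-primitive with `γ(B) = 2m - 1`, then `B` is a positive scalar multiple
of `A_θ`. -/
theorem stmt_19 (m : ℕ) (hm : 6 ≤ m) (θ : ℝ)
    (hθ : θ ∈ Set.Ioo (2 * π / (m : ℝ)) (2 * π / ((m : ℝ) - 1)))
    (r : ℝ) (hr0 : 0 < r) (hroot : gpoly m θ r = 0)
    (huniq : ∀ s : ℝ, 0 < s → gpoly m θ s = 0 → s = r)
    (B : Matrix (Fin 3) (Fin 3) ℝ)
    (hB : KPrimitive (Ktheta m r θ) B)
    (hγ : expnt (Ktheta m r θ) B = 2 * m - 1) :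
    ∃ c : ℝ, 0 < c ∧ B = c • Atheta r θ := by
  obtain ⟨n, rfl⟩ : ∃ n, m = n + 1 := ⟨m - 1, by omega⟩
  have hn : 5 ≤ n := by omega
  have hn' : (5 : ℝ) ≤ n := by exact_mod_cast hn
  obtain ⟨hθ1, hθ2⟩ := hθ
  push_cast at hθ1 hθ2
  rw [add_sub_cancel_right] at hθ2
  rw [div_lt_iff₀ (by linarith)] at hθ1
  rw [lt_div_iff₀ (by linarith)] at hθ2
  have h1 : (n : ℝ) * θ < 2 * π := by linarith
  have h2 : 2 * π < ((n : ℝ) + 1) * θ := by linarith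
  obtain ⟨hθ0, hθp, s1, s2, s3⟩ := sins hn h1 h2
  have hR : RootEq n θ r := by
    unfold gpoly at hroot
    push_cast at hroot
    rw [add_sub_cancel_right] at hroot
    unfold RootEq
    field_simp at hroot
    rw [mul_comm θ ((n:ℝ)+1)] at hroot
    linarith
  have hd : ∀ i j k, i < j → j < k → k < n + 1 →
      0 < det3 (xvec r θ i) (xvec r θ j) (xvec r θ k) := by
    intro i j k hij hjk hk
    obtain ⟨a, rfl⟩ : ∃ a, j = i + a := ⟨j - i, by omega⟩
    obtain ⟨b, rfl⟩ : ∃ b, k = i + a + b := ⟨k - (i + a), by omega⟩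
    rw [det_xvec]
    exact mul_pos (pow_pos hr0 _)
      (H_pos hn hr0 h1 h2 hR (by omega) (by omega) (by omega))
  have hstep : ∀ i, Atheta r θ *ᵥ xvec r θ i = xvec r θ (i+1) := by
    intro i
    have e : ((i + 1 : ℕ) : ℝ) * θ = i * θ + θ := by push_cast; ring
    unfold xvec
    rw [e, Real.cos_add, Real.sin_add]
    ext j
    fin_cases j <;>
      simp [Atheta, Matrix.mulVec, dotProduct, Fin.sum_univ_three] <;> ring
  have hdet : (Atheta r θ).det ≠ 0 := by
    have : (Atheta r θ).det = r ^ 2 := by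
      rw [Matrix.det_fin_three]
      simp [Atheta]
      linear_combination r ^ 2 * Real.sin_sq_add_cos_sq θ
    rw [this]
    positivity
  refine abstract_main n hn (xvec r θ) hd (Atheta r θ) B (fun i _ => hstep i) hdet
    (-(r ^ (n+1) * Real.sin (n * θ)) / Real.sin θ)
    (r ^ n * Real.sin (((n : ℝ) + 1) * θ) / Real.sin θ) ?_ ?_ ?_ hB ?_
  · apply div_pos _ s1
    have := mul_pos (pow_pos hr0 (n+1)) (neg_pos.2 s2)
    linarith
  · exact div_pos (mul_pos (pow_pos hr0 n) s3) s1
  · rw [hstep]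
    unfold RootEq at hR
    have e : ((n : ℝ) + 1) * θ = n * θ + θ := by ring
    have t1 := Real.sin_sq_add_cos_sq θ
    rw [e, Real.sin_add] at hR
    unfold xvec
    push_cast
    rw [e, Real.sin_add, Real.cos_add]
    ext j
    fin_cases j
    · simp
      field_simp
      linear_combination (-(r ^ (n+1) * Real.sin (n * θ))) * t1
    · simp
      field_simp
      ring
    · simp
      field_simp
      linear_combination hR
  · rw [show 2 * n + 1 = 2 * (n + 1) - 1 by omega]
    exact hγ
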